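/- arXiv:2103.15712 — 2 statements merged into one kernel-verified Lean document; each statement's English description precedes it below -/
import Mathlib

section
/- Let m, d ∈ ℕ with m ≥ d ≥ 2 and N = m^d. Let P be a jittered sampling point set of N points in [0,1)^d. Then E[D*(P)] ≤ 60.9984 · √(d·m^d) · (√(ln(4e·m/d)) + 2.9599) / √(m/d). -/
open MeasureTheory ProbabilityTheory Real

noncomputable section

/-- The axis-aligned cube `∏_i [x_i/m, x_i/m + 1/m)` of the `m`-grid partition of `[0,1)^d`. -/
def jitterCube (m d : ℕ) (x : Fin d → Fin m) : Set (Fin d → ℝ) :=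
  Set.univ.pi fun i => Set.Ico ((x i : ℝ) / m) ((x i : ℝ) / m + 1 / m)

/-- The distribution of a jittered sampling point configuration: independently, one point
uniformly distributed in each of the `m^d` cubes. -/
def jitterMeasure (m d : ℕ) : Measure ((Fin d → Fin m) → (Fin d → ℝ)) :=
  Measure.pi fun x => ((m : ENNReal) ^ d) • volume.restrict (jitterCube m d x)

open scoped Classical in
/-- Signed (non-normalized) discrepancy `|P ∩ A| - N·λ(A)` with `N = m^d` of a point
configuration `P`. -/
def jdisc (m d : ℕ) (P : (Fin d → Fin m) → (Fin d → ℝ)) (A : Set (Fin d → ℝ)) : ℝ :=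
  ((Finset.univ.filter fun x => P x ∈ A).card : ℝ) - (m : ℝ) ^ d * (volume A).toReal

/-- The anchored box `[0,y) = ∏_i [0, y_i)`. -/
def anchoredBox (d : ℕ) (y : Fin d → ℝ) : Set (Fin d → ℝ) :=
  Set.univ.pi fun i => Set.Ico 0 (y i)

/-- The (non-normalized) star discrepancy `D*(P) = sup_{y ∈ [0,1)^d} |disc([0,y))|`. -/
def starDisc (m d : ℕ) (P : (Fin d → Fin m) → (Fin d → ℝ)) : ℝ :=
  ⨆ y : {y : Fin d → ℝ // ∀ i, y i ∈ Set.Ico (0 : ℝ) 1}, |jdisc m d P (anchoredBox d y.1)|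

/-- The expected star discrepancy of a jittered sampling point set of `m^d` points. -/
def expStarDisc (m d : ℕ) : ℝ :=
  ∫ P, starDisc m d P ∂(jitterMeasure m d)

/-! The discrepancy of a set `A` is a sum of independent centred indicators, one for each cube, so
its exponential moments are controlled by its variance `V`, and the maximal discrepancy of `n` sets
has expectation of order `√(V * log n)` as long as `log n` is at most of order `V`. The variance is
at most `m ^ d * λ(A)`, and for an anchored box it is at most `d * m ^ (d - 1)`, because the cubes
inside or outside the box do not contribute.

Cover the anchored boxes by brackets of volume at most `δ k = d / (m * 4 ^ k)`, for every `k`. The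
sets by which brackets of consecutive levels differ have variance at most
`4 ^ (-k) * d * m ^ (d - 1)`, while level `k` has at most `(4 * e * m / d) ^ (2 * (k + 1) * d)`
brackets. The expected maxima over the levels are therefore dominated by a multiple of the
convergent series `∑ (k + 1) * 2 ^ (-k) * √(d * m ^ (d - 1)) * √(d * log (4 * e * m / d))`. -/

section MaximalInequality

variable {Ω ι : Type*} {mΩ : MeasurableSpace Ω} {μ : Measure Ω} {t : ℝ}

lemma mgf_le_exp_sq_mul_variance [IsProbabilityMeasure μ] {X : Ω → ℝ} (hX : AEMeasurable X μ)
    (hbound : ∀ᵐ ω ∂μ, |X ω| ≤ 1) (hmean : μ[X] = 0) (ht : |t| ≤ 1) :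
    mgf X μ t ≤ exp (t ^ 2 * Var[X; μ]) := by
  have hX_memLp : MemLp X 2 μ := .of_bound hX.aestronglyMeasurable 1 hbound
  have hX_int : Integrable X μ := hX_memLp.integrable one_le_two
  have hX_sq : Integrable (fun ω => t ^ 2 * X ω ^ 2) μ := hX_memLp.integrable_sq.const_mul _
  have hlinear : Integrable (fun ω => 1 + t * X ω) μ :=
    (integrable_const 1).add (hX_int.const_mul t)
  have hpointwise : ∀ᵐ ω ∂μ, exp (t * X ω) ≤ 1 + t * X ω + t ^ 2 * X ω ^ 2 := by
    filter_upwards [hbound] with ω hω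
    have htX : |t * X ω| ≤ 1 := abs_mul t (X ω) ▸ mul_le_one₀ ht (abs_nonneg _) hω
    linarith [(abs_le.1 (abs_exp_sub_one_sub_id_le htX)).2, mul_pow t (X ω) 2]
  calc mgf X μ t ≤ ∫ ω, (1 + t * X ω + t ^ 2 * X ω ^ 2) ∂μ :=
        integral_mono_of_nonneg (.of_forall fun _ => (exp_pos _).le) (hlinear.add hX_sq)
          hpointwise
    _ = t ^ 2 * Var[X; μ] + 1 := by
        rw [integral_add hlinear hX_sq, integral_add (integrable_const 1) (hX_int.const_mul t),
          integral_const_mul, integral_const_mul, hmean, variance_of_integral_eq_zero hX hmean]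
        simp [add_comm]
    _ ≤ exp (t ^ 2 * Var[X; μ]) := add_one_le_exp _

lemma mgf_sum_le_exp_sq_mul_variance [Fintype ι] {X : ι → Ω → ℝ} (hindep : iIndepFun X μ)
    (hX : ∀ i, AEMeasurable (X i) μ) (hbound : ∀ i, ∀ᵐ ω ∂μ, |X i ω| ≤ 1)
    (hmean : ∀ i, μ[X i] = 0) (ht : |t| ≤ 1) :
    mgf (∑ i, X i) μ t ≤ exp (t ^ 2 * Var[∑ i, X i; μ]) := by
  have := hindep.isProbabilityMeasure
  have hvar : Var[∑ i, X i; μ] = ∑ i, Var[X i; μ] :=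
    IndepFun.variance_sum (fun i _ => .of_bound (hX i).aestronglyMeasurable 1 (hbound i))
      fun i _ j _ hij => hindep.indepFun hij
  rw [hindep.mgf_sum₀ hX, hvar, Finset.mul_sum, exp_sum]
  exact Finset.prod_le_prod (fun _ _ => mgf_nonneg)
    fun i _ => mgf_le_exp_sq_mul_variance (hX i) (hbound i) (hmean i) ht

lemma abs_le_iSup_abs [Finite ι] (x : ι → ℝ) (i : ι) : |x i| ≤ ⨆ j, |x j| :=
  le_ciSup (Set.finite_range fun j => |x j|).bddAbove i

lemma integrable_iSup_abs [Finite ι] {X : ι → Ω → ℝ} (hX : ∀ i, Integrable (X i) μ) :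
    Integrable (fun ω => ⨆ i, |X i ω|) μ := by
  cases nonempty_fintype ι
  refine (integrable_finsetSum Finset.univ fun i _ => (hX i).abs).mono'
    (AEMeasurable.iSup fun i => (hX i).aemeasurable.abs).aestronglyMeasurable
    (.of_forall fun ω => ?_)
  rw [norm_of_nonneg (Real.iSup_nonneg fun i => abs_nonneg _)]
  exact Real.iSup_le (fun i => Finset.single_le_sum (f := fun i => |X i ω|)
    (fun _ _ => abs_nonneg _) (Finset.mem_univ i)) (Finset.sum_nonneg fun _ _ => abs_nonneg _)

lemma mul_iSup_abs_le [Fintype ι] [Nonempty ι] (ht : 0 < t) (c : ℝ) (x : ι → ℝ) :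
    t * ⨆ i, |x i| ≤ exp (-c) * ∑ i, (exp (t * x i) + exp (-t * x i)) + (c - 1) := by
  obtain ⟨i, hi⟩ := exists_eq_ciSup_of_finite (f := fun i => |x i|)
  have htangent : t * |x i| - c + 1 ≤ exp (-c) * exp (t * |x i|) := by
    rw [← exp_add, neg_add_eq_sub]
    exact add_one_le_exp _
  have hsum : exp (t * |x i|) ≤ ∑ i, (exp (t * x i) + exp (-t * x i)) := by
    refine le_trans ?_ (Finset.single_le_sum (f := fun i => exp (t * x i) + exp (-t * x i))
      (fun _ _ => by positivity) (Finset.mem_univ i))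
    simpa [abs_mul, abs_of_pos ht] using exp_abs_le (t * x i)
  rw [← hi]
  linarith [mul_le_mul_of_nonneg_left hsum (exp_pos (-c)).le]

theorem integral_iSup_abs_le [IsProbabilityMeasure μ] [Fintype ι] [Nonempty ι] {X : ι → Ω → ℝ}
    {b : ℝ} (ht : 0 < t) (hint : ∀ i, Integrable (fun ω => exp (t * X i ω)) μ)
    (hint_neg : ∀ i, Integrable (fun ω => exp (-t * X i ω)) μ)
    (hmgf : ∀ i, mgf (X i) μ t ≤ exp b) (hmgf_neg : ∀ i, mgf (X i) μ (-t) ≤ exp b) :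
    ∫ ω, ⨆ i, |X i ω| ∂μ ≤ (log (2 * Fintype.card ι) + b) / t := by
  -- Jensen's inequality for `exp (t * max |X i|)`, in the form of the tangent to `exp` at `c`.
  set c := log (2 * Fintype.card ι) + b
  have hcard : (0 : ℝ) < 2 * Fintype.card ι := by positivity
  have hpair : ∀ i, Integrable (fun ω => exp (t * X i ω) + exp (-t * X i ω)) μ :=
    fun i => (hint i).add (hint_neg i)
  have hsum : Integrable (fun ω => exp (-c) * ∑ i, (exp (t * X i ω) + exp (-t * X i ω))) μ :=
    (integrable_finsetSum _ fun i _ => hpair i).const_mul _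
  have hmoments : ∫ ω, ∑ i, (exp (t * X i ω) + exp (-t * X i ω)) ∂μ ≤ exp c := by
    rw [integral_finsetSum _ fun i _ => hpair i, exp_add, exp_log hcard]
    calc ∑ i, ∫ ω, (exp (t * X i ω) + exp (-t * X i ω)) ∂μ ≤ ∑ _i : ι, 2 * exp b := by
          refine Finset.sum_le_sum fun i _ => ?_
          rw [integral_add (hint i) (hint_neg i), two_mul]
          exact add_le_add (hmgf i) (hmgf_neg i)
      _ = 2 * Fintype.card ι * exp b := by simp; ring
  rw [le_div_iff₀' ht, ← integral_const_mul]
  calc ∫ ω, t * ⨆ i, |X i ω| ∂μ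
      ≤ ∫ ω, (exp (-c) * ∑ i, (exp (t * X i ω) + exp (-t * X i ω)) + (c - 1)) ∂μ :=
        integral_mono_of_nonneg
          (.of_forall fun _ => mul_nonneg ht.le (Real.iSup_nonneg fun _ => abs_nonneg _))
          (hsum.add (integrable_const _)) (.of_forall fun ω => mul_iSup_abs_le ht c (X · ω))
    _ = exp (-c) * ∫ ω, ∑ i, (exp (t * X i ω) + exp (-t * X i ω)) ∂μ + (c - 1) := by
        rw [integral_add hsum (integrable_const _), integral_const_mul]
        simp
    _ ≤ exp (-c) * exp c + (c - 1) := by gcongr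
    _ = c := by rw [← exp_add]; simp

end MaximalInequality

section CenteredIndicator

variable {Ω : Type*} {mΩ : MeasurableSpace Ω} {μ : Measure Ω} {A B : Set Ω}

/-- The indicator function of an event, minus the probability of that event. -/
def centeredIndicator (μ : Measure Ω) (A : Set Ω) (ω : Ω) : ℝ :=
  A.indicator 1 ω - μ.real A

lemma measurable_centeredIndicator (hA : MeasurableSet A) :
    Measurable (centeredIndicator μ A) :=
  (measurable_one.indicator hA).sub_const _

variable [IsProbabilityMeasure μ]

lemma abs_centeredIndicator_le_one (ω : Ω) : |centeredIndicator μ A ω| ≤ 1 := by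
  have hnonneg : 0 ≤ μ.real A := measureReal_nonneg
  have hle_one : μ.real A ≤ 1 := measureReal_le_one
  by_cases hω : ω ∈ A <;> simp [centeredIndicator, hω, abs_le] <;> linarith

lemma memLp_centeredIndicator (hA : MeasurableSet A) (p : ENNReal) :
    MemLp (centeredIndicator μ A) p μ :=
  .of_bound (measurable_centeredIndicator hA).aestronglyMeasurable 1
    (.of_forall abs_centeredIndicator_le_one)

lemma integral_centeredIndicator (hA : MeasurableSet A) : μ[centeredIndicator μ A] = 0 := by
  have hind : Integrable (A.indicator (1 : Ω → ℝ)) μ := (integrable_const 1).indicator hA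
  simp [centeredIndicator, integral_sub hind (integrable_const _), integral_indicator_one hA]

lemma variance_centeredIndicator (hA : MeasurableSet A) :
    Var[centeredIndicator μ A; μ] = μ.real A * (1 - μ.real A) := by
  have hmeas : Measurable (A.indicator (1 : Ω → ℝ)) := measurable_one.indicator hA
  have hzero : {ω | A.indicator (1 : Ω → ℝ) ω = 0} = Aᶜ := by ext; simp
  have hone : {ω | A.indicator (1 : Ω → ℝ) ω = 1} = A := by
    ext ω
    by_cases hω : ω ∈ A <;> simp [hω]
  calc Var[centeredIndicator μ A; μ] = Var[A.indicator 1; μ] :=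
        variance_sub_const hmeas.aestronglyMeasurable _
    _ = μ.real Aᶜ * μ.real A := by
        rw [variance_of_ae_eq_zero_or_one hmeas.aemeasurable
          (.of_forall fun ω => Set.indicator_eq_zero_or_self A 1 ω), hzero, hone]
    _ = μ.real A * (1 - μ.real A) := by rw [probReal_compl_eq_one_sub hA, mul_comm]

lemma variance_centeredIndicator_le (hA : MeasurableSet A) :
    Var[centeredIndicator μ A; μ] ≤ μ.real A := by
  rw [variance_centeredIndicator hA]
  exact mul_le_of_le_one_right measureReal_nonneg (sub_le_self 1 measureReal_nonneg)

lemma variance_centeredIndicator_le_sdiff (hA : MeasurableSet A) (hB : MeasurableSet B)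
    (hAB : A ⊆ B) (htrivial : μ.real A = 0 ∨ μ.real A = 1) :
    Var[centeredIndicator μ B; μ] ≤ μ.real (B \ A) := by
  rw [measureReal_sdiff hAB hA]
  rcases htrivial with hzero | hone
  · simpa [hzero] using variance_centeredIndicator_le hB
  · have hB_one : μ.real B = 1 :=
      measureReal_le_one.antisymm (hone.symm.le.trans (measureReal_mono hAB))
    rw [variance_centeredIndicator hB, hone, hB_one]
    simp

end CenteredIndicator

section BracketingCover

variable {ι : Type*} [Fintype ι]

lemma choose_le_exp_mul_div_pow (n k : ℕ) : (n.choose k : ℝ) ≤ (exp 1 * (n / k)) ^ k := by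
  rcases Nat.eq_zero_or_pos k with rfl | hk
  · simp
  have hk' : (0 : ℝ) < k := by exact_mod_cast hk
  calc (n.choose k : ℝ) ≤ (n : ℝ) ^ k / k.factorial := Nat.choose_le_pow_div k n
    _ = (n / k : ℝ) ^ k * ((k : ℝ) ^ k / k.factorial) := by
        rw [div_pow, mul_div_assoc', div_mul_cancel₀ _ (pow_pos hk' k).ne']
    _ ≤ (n / k : ℝ) ^ k * exp k := by gcongr; exact pow_div_factorial_le_exp _ hk'.le k
    _ = (exp 1 * (n / k)) ^ k := by rw [mul_pow, ← exp_nat_mul, mul_one, mul_comm]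

/-- The lattice points of the standard simplex of size `M`: the functions `a : ι → ℕ` with
`∑ i, a i ≤ M`. They are obtained from the functions on `Option ι` with sum exactly `M` by
forgetting the slack coordinate `none`. -/
def latticeSimplex (ι : Type*) [Fintype ι] (M : ℕ) : Finset (ι → ℕ) :=
  open scoped Classical in
  ((Finset.univ : Finset (Option ι)).finsuppAntidiag M).image fun b i => b (some i)

lemma mem_latticeSimplex {M : ℕ} {a : ι → ℕ} : a ∈ latticeSimplex ι M ↔ ∑ i, a i ≤ M := by
  classical
  simp only [latticeSimplex, Finset.mem_image, Finset.mem_finsuppAntidiag]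
  constructor
  · rintro ⟨b, ⟨hb, -⟩, rfl⟩
    rw [← hb, Fintype.sum_option]
    exact Nat.le_add_left _ _
  · intro ha
    refine ⟨Finsupp.equivFunOnFinite.symm fun o => o.elim (M - ∑ i, a i) a, ⟨?_, by simp⟩, ?_⟩
    · simp [Fintype.sum_option, Nat.sub_add_cancel ha]
    · ext; simp

lemma card_latticeSimplex_le (M : ℕ) :
    (latticeSimplex ι M).card ≤ (Fintype.card ι + M).choose (Fintype.card ι) := by
  classical
  refine Finset.card_image_le.trans_eq ?_
  rw [Finset.card_finsuppAntidiag_nat_eq_choose, Finset.card_univ, Fintype.card_option,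
    Nat.add_right_comm, Nat.add_sub_cancel, Nat.choose_symm_add]

/-- A finite family `B` of brackets `(l, z)` with corners in the unit cube such that every point
of the unit cube lies between `l` and `z` for some bracket, while the volumes of the anchored
boxes `[0, l)` and `[0, z)` differ by at most `δ`. -/
structure IsBracketingCover (δ : ℝ) (B : Finset ((ι → ℝ) × (ι → ℝ))) : Prop where
  nonneg : ∀ p ∈ B, 0 ≤ p.1
  fst_le_snd : ∀ p ∈ B, p.1 ≤ p.2
  le_one : ∀ p ∈ B, p.2 ≤ 1
  prod_sub_prod_le : ∀ p ∈ B, ∏ i, p.2 i - ∏ i, p.1 i ≤ δ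
  exists_mem_Icc : ∀ y ∈ Set.Icc (0 : ι → ℝ) 1, ∃ p ∈ B, y ∈ Set.Icc p.1 p.2

/-- A bracket of `B` around the point `y`; an arbitrary pair if there is none. -/
def bracketOf (B : Finset ((ι → ℝ) × (ι → ℝ))) (y : ι → ℝ) : (ι → ℝ) × (ι → ℝ) :=
  Classical.epsilon fun p => p ∈ B ∧ y ∈ Set.Icc p.1 p.2

namespace IsBracketingCover

variable {δ : ℝ} {B : Finset ((ι → ℝ) × (ι → ℝ))} {p : (ι → ℝ) × (ι → ℝ)} {y : ι → ℝ}

lemma snd_mem_Icc (hB : IsBracketingCover δ B) (hp : p ∈ B) : p.2 ∈ Set.Icc 0 1 :=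
  ⟨(hB.nonneg p hp).trans (hB.fst_le_snd p hp), hB.le_one p hp⟩

lemma bracketOf_mem (hB : IsBracketingCover δ B) (hy : y ∈ Set.Icc 0 1) : bracketOf B y ∈ B :=
  (Classical.epsilon_spec (hB.exists_mem_Icc y hy)).1

lemma mem_Icc_bracketOf (hB : IsBracketingCover δ B) (hy : y ∈ Set.Icc 0 1) :
    y ∈ Set.Icc (bracketOf B y).1 (bracketOf B y).2 :=
  (Classical.epsilon_spec (hB.exists_mem_Icc y hy)).2

lemma nonempty (hB : IsBracketingCover δ B) : B.Nonempty :=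
  ⟨_, hB.bracketOf_mem (Set.left_mem_Icc.2 zero_le_one)⟩

end IsBracketingCover

/-- The bracket of the geometric grid with ratio `q` whose upper corner is `q ^ a`. The simplex
face `∑ i, a i = M` has no next grid point inside the simplex; there the lower corner is `0`. -/
def geometricBracket (q : ℝ) (M : ℕ) (a : ι → ℕ) : (ι → ℝ) × (ι → ℝ) :=
  (if ∑ i, a i < M then fun i => q ^ (a i + 1) else 0, fun i => q ^ a i)

lemma geometricBracket_prod_sub_prod_le [Nonempty ι] {q δ : ℝ} {M : ℕ} (hq0 : 0 ≤ q) (hq1 : q ≤ 1)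
    (hcard : 1 - δ ≤ q ^ Fintype.card ι) (hM : q ^ M ≤ δ) {a : ι → ℕ}
    (ha : a ∈ latticeSimplex ι M) :
    ∏ i, (geometricBracket q M a).2 i - ∏ i, (geometricBracket q M a).1 i ≤ δ := by
  have hδ : 0 ≤ δ := (pow_nonneg hq0 M).trans hM
  by_cases hlt : ∑ i, a i < M
  · have hprod : ∏ i, q ^ a i ≤ 1 :=
      Finset.prod_le_one (fun _ _ => pow_nonneg hq0 _) fun _ _ => pow_le_one₀ hq0 hq1
    have hprod0 : 0 ≤ ∏ i, q ^ a i := Finset.prod_nonneg fun _ _ => pow_nonneg hq0 _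
    calc ∏ i, (geometricBracket q M a).2 i - ∏ i, (geometricBracket q M a).1 i
        = (∏ i, q ^ a i) * (1 - q ^ Fintype.card ι) := by
          simp [geometricBracket, hlt, pow_succ, Finset.prod_mul_distrib, mul_sub]
      _ ≤ (∏ i, q ^ a i) * δ := mul_le_mul_of_nonneg_left (by linarith) hprod0
      _ ≤ δ := mul_le_of_le_one_left hδ hprod
  · have hsum : ∑ i, a i = M := (mem_latticeSimplex.1 ha).antisymm (not_lt.1 hlt)
    simpa [geometricBracket, hlt, Finset.prod_pow_eq_pow_sum, hsum] using hM

lemma exists_mem_Icc_geometricBracket {q : ℝ} (M : ℕ) {y : ι → ℝ} (hy : y ∈ Set.Icc 0 1) :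
    ∃ a ∈ latticeSimplex ι M,
      y ∈ Set.Icc (geometricBracket q M a).1 (geometricBracket q M a).2 := by
  classical
  let above := {a ∈ latticeSimplex ι M | ∀ i, y i ≤ q ^ a i}
  have habove : above.Nonempty := ⟨0, by simpa [above, mem_latticeSimplex] using fun i => hy.2 i⟩
  obtain ⟨a, ha, hmax⟩ := above.exists_maximal habove
  obtain ⟨haM, hya⟩ := Finset.mem_filter.1 ha
  refine ⟨a, haM, ?_, hya⟩
  by_cases hlt : ∑ i, a i < M
  · simp only [geometricBracket, hlt, if_true]
    intro i
    by_contra! hyi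
    have hsucc : a + Pi.single i 1 ∈ above := by
      refine Finset.mem_filter.2 ⟨mem_latticeSimplex.2 ?_, fun j => ?_⟩
      · simpa [Finset.sum_add_distrib] using hlt
      · rcases eq_or_ne j i with rfl | hj
        · simpa using hyi.le
        · simpa [hj] using hya j
    have := hmax hsucc (by simp) i
    simp at this
  · simpa [geometricBracket, hlt] using hy.1

lemma isBracketingCover_image_geometricBracket [Nonempty ι] [DecidableEq ((ι → ℝ) × (ι → ℝ))]
    {q δ : ℝ} {M : ℕ} (hq0 : 0 ≤ q) (hq1 : q ≤ 1) (hcard : 1 - δ ≤ q ^ Fintype.card ι)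
    (hM : q ^ M ≤ δ) :
    IsBracketingCover δ ((latticeSimplex ι M).image (geometricBracket q M)) where
  nonneg := by
    simp only [Finset.forall_mem_image, geometricBracket]
    intro a _
    split_ifs
    exacts [fun i => pow_nonneg hq0 _, le_rfl]
  fst_le_snd := by
    simp only [Finset.forall_mem_image, geometricBracket]
    intro a _
    split_ifs
    exacts [fun i => pow_le_pow_of_le_one hq0 hq1 (Nat.le_succ _), fun i => pow_nonneg hq0 _]
  le_one := Finset.forall_mem_image.2 fun a _ i => pow_le_one₀ hq0 hq1
  prod_sub_prod_le :=
    Finset.forall_mem_image.2 fun a => geometricBracket_prod_sub_prod_le hq0 hq1 hcard hM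
  exists_mem_Icc y hy := by
    obtain ⟨a, ha, hya⟩ := exists_mem_Icc_geometricBracket M hy
    exact ⟨_, Finset.mem_image_of_mem _ ha, hya⟩

theorem exists_isBracketingCover (ι : Type*) [Fintype ι] [Nonempty ι] {δ : ℝ} (hδ0 : 0 < δ)
    (hδ1 : δ ≤ 1) : ∃ B : Finset ((ι → ℝ) × (ι → ℝ)), IsBracketingCover δ B ∧
      (B.card : ℝ) ≤ (exp 1 * (3 / δ ^ 2)) ^ Fintype.card ι := by
  classical
  set d := Fintype.card ι
  have hd1 : (1 : ℝ) ≤ d := by exact_mod_cast Fintype.card_pos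
  have hd0 : (0 : ℝ) < d := by linarith
  set M := ⌈d / δ ^ 2⌉₊
  have hM_le : d / δ ^ 2 ≤ M := Nat.le_ceil _
  have hM_lt : M < d / δ ^ 2 + 1 := Nat.ceil_lt_add_one (by positivity)
  set q := exp (-(δ / d))
  have hq_card : 1 - δ ≤ q ^ d := by
    rw [← exp_nat_mul, mul_neg, mul_div_cancel₀ δ hd0.ne']
    exact one_sub_le_exp_neg δ
  have hq_M : q ^ M ≤ δ := by
    have hexponent : δ⁻¹ ≤ M * (δ / d) := by
      calc δ⁻¹ = d / δ ^ 2 * (δ / d) := by field_simp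
        _ ≤ M * (δ / d) := by gcongr
    rw [← exp_nat_mul, mul_neg, exp_neg]
    exact inv_le_of_inv_le₀ hδ0 (hexponent.trans (by linarith [add_one_le_exp (M * (δ / d))]))
  refine ⟨_, isBracketingCover_image_geometricBracket (exp_pos _).le
    (exp_le_one_iff.2 (by rw [neg_nonpos]; positivity)) hq_card hq_M, ?_⟩
  have hratio : ((d + M : ℕ) : ℝ) / d ≤ 3 / δ ^ 2 := by
    have hinv : 1 ≤ (δ ^ 2)⁻¹ := (one_le_inv₀ (by positivity)).2 (pow_le_one₀ hδ0.le hδ1)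
    rw [div_le_iff₀ hd0]
    calc ((d + M : ℕ) : ℝ) ≤ d + (d / δ ^ 2 + 1) := by push_cast; gcongr
      _ ≤ d * (δ ^ 2)⁻¹ + (d * (δ ^ 2)⁻¹ + d * (δ ^ 2)⁻¹) := by
          rw [div_eq_mul_inv]
          gcongr
          exacts [le_mul_of_one_le_right hd0.le hinv, one_le_mul_of_one_le_of_one_le hd1 hinv]
      _ = 3 / δ ^ 2 * d := by ring
  calc (_ : ℝ) ≤ ((d + M).choose d : ℕ) := by
        exact_mod_cast Finset.card_image_le.trans (card_latticeSimplex_le M)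
    _ ≤ (exp 1 * (((d + M : ℕ) : ℝ) / d)) ^ d := choose_le_exp_mul_div_pow _ _
    _ ≤ (exp 1 * (3 / δ ^ 2)) ^ d := by gcongr

end BracketingCover

section AnchoredBox

variable {d : ℕ} {y z : Fin d → ℝ}

lemma measurableSet_anchoredBox (y : Fin d → ℝ) : MeasurableSet (anchoredBox d y) :=
  .univ_pi fun _ => measurableSet_Ico

lemma anchoredBox_mono (hyz : y ≤ z) : anchoredBox d y ⊆ anchoredBox d z :=
  Set.pi_mono fun i _ => Set.Ico_subset_Ico_right (hyz i)

lemma volume_anchoredBox_ne_top (y : Fin d → ℝ) : volume (anchoredBox d y) ≠ ⊤ := by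
  simp [anchoredBox, Real.volume_pi_Ico, ENNReal.prod_ne_top]

lemma volume_real_anchoredBox (hy : 0 ≤ y) : volume.real (anchoredBox d y) = ∏ i, y i := by
  simpa [measureReal_def, anchoredBox] using Real.volume_pi_Ico_toReal hy

lemma volume_real_anchoredBox_sdiff (hy : 0 ≤ y) (hyz : y ≤ z) :
    volume.real (anchoredBox d z \ anchoredBox d y) = ∏ i, z i - ∏ i, y i := by
  rw [measureReal_sdiff (anchoredBox_mono hyz) (measurableSet_anchoredBox y)
    (volume_anchoredBox_ne_top z), volume_real_anchoredBox hy,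
    volume_real_anchoredBox (hy.trans hyz)]

lemma prod_sub_prod_le_sum_sub {ι : Type*} [Fintype ι] {a b : ι → ℝ} (hb : 0 ≤ b) (hba : b ≤ a)
    (ha : a ≤ 1) : ∏ i, a i - ∏ i, b i ≤ ∑ i, (a i - b i) := by
  classical
  suffices ∀ s : Finset ι, ∏ i ∈ s, a i - ∏ i ∈ s, b i ≤ ∑ i ∈ s, (a i - b i) from this _
  intro s
  induction s using Finset.induction_on with
  | empty => simp
  | insert i s hi ih =>
    have hprod_a : ∏ j ∈ s, a j ≤ 1 :=
      Finset.prod_le_one (fun j _ => (hb j).trans (hba j)) fun j _ => ha j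
    have hb_le_one : b i ≤ 1 := (hba i).trans (ha i)
    have hsum : 0 ≤ ∑ j ∈ s, (a j - b j) := Finset.sum_nonneg fun j _ => sub_nonneg.2 (hba j)
    rw [Finset.prod_insert hi, Finset.prod_insert hi, Finset.sum_insert hi]
    calc a i * ∏ j ∈ s, a j - b i * ∏ j ∈ s, b j
        = (a i - b i) * ∏ j ∈ s, a j + b i * (∏ j ∈ s, a j - ∏ j ∈ s, b j) := by ring
      _ ≤ (a i - b i) + ∑ j ∈ s, (a j - b j) :=
          add_le_add (mul_le_of_le_one_right (sub_nonneg.2 (hba i)) hprod_a)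
            ((mul_le_mul_of_nonneg_left ih (hb i)).trans (mul_le_of_le_one_left hsum hb_le_one))

end AnchoredBox

section JitterLaw

variable {m d : ℕ}

/-- The uniform distribution on the cube `jitterCube m d x`, from which the point with index `x`
of a jittered sampling point set is drawn. -/
def jitterLaw (m d : ℕ) (x : Fin d → Fin m) : Measure (Fin d → ℝ) :=
  (m : ENNReal) ^ d • volume.restrict (jitterCube m d x)

lemma jitterMeasure_eq_pi (m d : ℕ) : jitterMeasure m d = Measure.pi (jitterLaw m d) := rfl

lemma measurableSet_jitterCube (x : Fin d → Fin m) : MeasurableSet (jitterCube m d x) :=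
  .univ_pi fun _ => measurableSet_Ico

variable [NeZero m]

lemma mem_jitterCube_iff {x : Fin d → Fin m} {u : Fin d → ℝ} :
    u ∈ jitterCube m d x ↔ ∀ i, ⌊m * u i⌋ = x i := by
  have hm : (0 : ℝ) < m := Nat.cast_pos.2 (NeZero.pos m)
  simp only [jitterCube, Set.mem_univ_pi, Set.mem_Ico, Int.floor_eq_iff, ← add_div,
    div_le_iff₀' hm, lt_div_iff₀' hm, Int.cast_natCast]

lemma volume_jitterCube (x : Fin d → Fin m) :
    volume (jitterCube m d x) = ((m : ENNReal) ^ d)⁻¹ := by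
  have hm : (0 : ℝ) < m := Nat.cast_pos.2 (NeZero.pos m)
  simp [jitterCube, Real.volume_pi_Ico, ENNReal.ofReal_inv_of_pos hm, ENNReal.inv_pow]

instance isProbabilityMeasure_jitterLaw (x : Fin d → Fin m) :
    IsProbabilityMeasure (jitterLaw m d x) where
  measure_univ := by
    have hm : (m : ENNReal) ^ d ≠ 0 := pow_ne_zero d (NeZero.ne _)
    simp [jitterLaw, volume_jitterCube, ENNReal.mul_inv_cancel hm]

instance isProbabilityMeasure_jitterMeasure : IsProbabilityMeasure (jitterMeasure m d) :=
  inferInstanceAs (IsProbabilityMeasure (Measure.pi (jitterLaw m d)))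

lemma pairwise_disjoint_jitterCube : Pairwise (Function.onFun Disjoint (jitterCube m d)) :=
  fun x y hxy => Set.disjoint_left.2 fun u hx hy => hxy <| funext fun i => Fin.ext <| by
    exact_mod_cast (mem_jitterCube_iff.1 hx i).symm.trans (mem_jitterCube_iff.1 hy i)

lemma iUnion_jitterCube : ⋃ x, jitterCube m d x = anchoredBox d 1 := by
  have hm : (0 : ℝ) < m := Nat.cast_pos.2 (NeZero.pos m)
  ext u
  simp only [Set.mem_iUnion, mem_jitterCube_iff, anchoredBox, Set.mem_univ_pi, Set.mem_Ico,
    Pi.one_apply]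
  constructor
  · rintro ⟨x, hx⟩ i
    have hfloor := Int.floor_eq_iff.1 (hx i)
    have hx_lt : ((x i : ℕ) : ℝ) + 1 ≤ m := by exact_mod_cast (x i).is_lt
    push_cast at hfloor
    constructor <;> nlinarith [(Nat.cast_nonneg (x i : ℕ) : (0 : ℝ) ≤ _)]
  · intro hu
    have hfloor0 : ∀ i, 0 ≤ ⌊m * u i⌋ := fun i => Int.floor_nonneg.2 (mul_nonneg hm.le (hu i).1)
    have hfloor1 : ∀ i, ⌊m * u i⌋ < m := fun i => Int.floor_lt.2 (by
      simpa using mul_lt_of_lt_one_right hm (hu i).2)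
    exact ⟨fun i => ⟨⌊m * u i⌋.toNat, (Int.toNat_lt (hfloor0 i)).2 (hfloor1 i)⟩,
      fun i => (Int.toNat_of_nonneg (hfloor0 i)).symm⟩

lemma sum_jitterLaw :
    ∑ x : Fin d → Fin m, jitterLaw m d x =
      (m : ENNReal) ^ d • volume.restrict (anchoredBox d 1) := by
  rw [← iUnion_jitterCube (m := m), Measure.restrict_iUnion pairwise_disjoint_jitterCube
    measurableSet_jitterCube, Measure.sum_fintype, Finset.smul_sum]
  rfl

lemma sum_jitterLaw_real {A : Set (Fin d → ℝ)} (hA : A ⊆ anchoredBox d 1) :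
    ∑ x, (jitterLaw m d x).real A = (m : ℝ) ^ d * volume.real A := by
  have hsum := congrArg (fun μ : Measure (Fin d → ℝ) => (μ A).toReal) (sum_jitterLaw (m := m))
  simpa [Measure.restrict_eq_self _ hA, ENNReal.toReal_sum, measureReal_def] using hsum

lemma jitterLaw_real_anchoredBox_natCast_div (x : Fin d → Fin m) (n : Fin d → ℕ) :
    (jitterLaw m d x).real (anchoredBox d fun i => n i / m) = 0 ∨
      (jitterLaw m d x).real (anchoredBox d fun i => n i / m) = 1 := by
  have hm : (0 : ℝ) < m := Nat.cast_pos.2 (NeZero.pos m)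
  have hcube : ∀ᵐ u ∂jitterLaw m d x, u ∈ jitterCube m d x :=
    Measure.ae_smul_measure (ae_restrict_mem (measurableSet_jitterCube x)) _
  have hmem : ∀ u ∈ jitterCube m d x,
      (u ∈ anchoredBox d fun i => (n i : ℝ) / m) ↔ ∀ i, (x i : ℕ) < n i := by
    intro u hu
    have hu_nonneg : ∀ i, 0 ≤ u i := fun i => by
      have := Int.floor_nonneg.1 ((Int.natCast_nonneg _).trans_eq (mem_jitterCube_iff.1 hu i).symm)
      exact nonneg_of_mul_nonneg_right this hm
    have hfloor : ∀ i, m * u i < n i ↔ (x i : ℕ) < n i := fun i => by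
      rw [← Int.cast_natCast (n i), ← Int.floor_lt, mem_jitterCube_iff.1 hu i, Nat.cast_lt]
    simp [anchoredBox, hu_nonneg, lt_div_iff₀' hm, hfloor]
  by_cases hx : ∀ i, (x i : ℕ) < n i
  · right
    rw [measureReal_def, ENNReal.toReal_eq_one_iff,
      ← mem_ae_iff_prob_eq_one (measurableSet_anchoredBox _)]
    filter_upwards [hcube] with u hu using (hmem u hu).2 hx
  · left
    rw [measureReal_eq_zero_iff, measure_eq_zero_iff_ae_notMem]
    filter_upwards [hcube] with u hu using fun hbox => hx ((hmem u hu).1 hbox)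

end JitterLaw

section JitteredDiscrepancy

variable {m d : ℕ} {A B : Set (Fin d → ℝ)}

lemma jdisc_eq_sum_indicator (P : (Fin d → Fin m) → Fin d → ℝ) (A : Set (Fin d → ℝ)) :
    jdisc m d P A = ∑ x, A.indicator 1 (P x) - (m : ℝ) ^ d * volume.real A := by
  classical
  simp [jdisc, Set.indicator_apply, measureReal_def]

lemma jdisc_sdiff (P : (Fin d → Fin m) → Fin d → ℝ) (hAB : A ⊆ B) (hA : MeasurableSet A)
    (hB : volume B ≠ ⊤) : jdisc m d P (B \ A) = jdisc m d P B - jdisc m d P A := by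
  simp only [jdisc_eq_sum_indicator, measureReal_sdiff hAB hA hB, Set.indicator_sdiff hAB,
    Pi.sub_apply, Finset.sum_sub_distrib]
  ring

lemma abs_jdisc_le_abs_jdisc_add (P : (Fin d → Fin m) → Fin d → ℝ) (hAB : A ⊆ B)
    (hB : volume B ≠ ⊤) : |jdisc m d P A| ≤ |jdisc m d P B| + (m : ℝ) ^ d * volume.real B := by
  have hcount :
      ∑ x, A.indicator (1 : (Fin d → ℝ) → ℝ) (P x) ≤ ∑ x, B.indicator 1 (P x) :=
    Finset.sum_le_sum fun x _ => Set.indicator_le_indicator_of_subset hAB (fun _ => zero_le_one) _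
  have hcount_nonneg : 0 ≤ ∑ x, A.indicator (1 : (Fin d → ℝ) → ℝ) (P x) :=
    Finset.sum_nonneg fun x _ => Set.indicator_nonneg (fun _ _ => zero_le_one) _
  have hvol : (m : ℝ) ^ d * volume.real A ≤ (m : ℝ) ^ d * volume.real B :=
    mul_le_mul_of_nonneg_left (measureReal_mono hAB hB) (by positivity)
  have hvol_nonneg : 0 ≤ (m : ℝ) ^ d * volume.real A := by positivity
  have hB_abs := le_abs_self (jdisc m d P B)
  rw [jdisc_eq_sum_indicator P B] at hB_abs ⊢
  rw [jdisc_eq_sum_indicator P A, abs_le]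
  constructor <;> linarith [abs_nonneg (∑ x, B.indicator 1 (P x) - (m : ℝ) ^ d * volume.real B)]

lemma measurable_jdisc (hA : MeasurableSet A) : Measurable fun P => jdisc m d P A := by
  simp only [jdisc_eq_sum_indicator]
  exact (Finset.measurable_sum _ fun x _ =>
    (measurable_one.indicator hA).comp (measurable_pi_apply x)).sub_const _

variable [NeZero m]

lemma jdisc_eq_sum_centeredIndicator (hA : A ⊆ anchoredBox d 1)
    (P : (Fin d → Fin m) → Fin d → ℝ) :
    jdisc m d P A = ∑ x, centeredIndicator (jitterLaw m d x) A (P x) := by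
  simp only [jdisc_eq_sum_indicator, centeredIndicator, Finset.sum_sub_distrib,
    sum_jitterLaw_real hA]

lemma abs_jdisc_le (hA : A ⊆ anchoredBox d 1) (P : (Fin d → Fin m) → Fin d → ℝ) :
    |jdisc m d P A| ≤ (m : ℝ) ^ d := by
  rw [jdisc_eq_sum_centeredIndicator hA]
  calc |∑ x, centeredIndicator (jitterLaw m d x) A (P x)|
      ≤ ∑ _x : Fin d → Fin m, (1 : ℝ) :=
        (Finset.abs_sum_le_sum_abs _ _).trans
          (Finset.sum_le_sum fun _ _ => abs_centeredIndicator_le_one _)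
    _ = (m : ℝ) ^ d := by simp

lemma integrable_jdisc (hA : MeasurableSet A) (hA_sub : A ⊆ anchoredBox d 1) :
    Integrable (fun P => jdisc m d P A) (jitterMeasure m d) :=
  .of_bound (measurable_jdisc hA).aestronglyMeasurable _ (.of_forall (abs_jdisc_le hA_sub))

lemma integrable_exp_mul_jdisc (t : ℝ) (hA : MeasurableSet A) (hA_sub : A ⊆ anchoredBox d 1) :
    Integrable (fun P => exp (t * jdisc m d P A)) (jitterMeasure m d) :=
  integrable_exp_mul_of_mem_Icc (measurable_jdisc hA).aemeasurable
    (.of_forall fun P => abs_le.1 (abs_jdisc_le hA_sub P))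

lemma mgf_jdisc_le {t : ℝ} (ht : |t| ≤ 1) (hA : MeasurableSet A) (hA_sub : A ⊆ anchoredBox d 1) :
    mgf (fun P => jdisc m d P A) (jitterMeasure m d) t ≤
      exp (t ^ 2 * Var[fun P => jdisc m d P A; jitterMeasure m d]) := by
  let X (x : Fin d → Fin m) := centeredIndicator (jitterLaw m d x) A
  have hX : ∀ x, Measurable (X x) := fun x => measurable_centeredIndicator hA
  have hsum : (fun P => jdisc m d P A) = ∑ x, fun P => X x (P x) := by
    ext P
    simp [X, jdisc_eq_sum_centeredIndicator hA_sub]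
  rw [hsum, jitterMeasure_eq_pi]
  refine mgf_sum_le_exp_sq_mul_variance (iIndepFun_pi fun x => (hX x).aemeasurable)
    (fun x => ((hX x).comp (measurable_pi_apply x)).aemeasurable)
    (fun x => .of_forall fun P => abs_centeredIndicator_le_one _) (fun x => ?_) ht
  rw [integral_comp_eval (hX x).aestronglyMeasurable,
    integral_centeredIndicator hA]

lemma variance_jdisc (hA : MeasurableSet A) (hA_sub : A ⊆ anchoredBox d 1) :
    Var[fun P => jdisc m d P A; jitterMeasure m d] =
      ∑ x, Var[centeredIndicator (jitterLaw m d x) A; jitterLaw m d x] := by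
  simp only [jdisc_eq_sum_centeredIndicator hA_sub, jitterMeasure_eq_pi]
  rw [← variance_sum_pi fun x => memLp_centeredIndicator hA 2]
  congr
  ext P
  simp

lemma variance_jdisc_le (hA : MeasurableSet A) (hA_sub : A ⊆ anchoredBox d 1) :
    Var[fun P => jdisc m d P A; jitterMeasure m d] ≤ (m : ℝ) ^ d * volume.real A := by
  rw [variance_jdisc hA hA_sub, ← sum_jitterLaw_real hA_sub]
  exact Finset.sum_le_sum fun x _ => variance_centeredIndicator_le hA

lemma variance_jdisc_anchoredBox_le {z : Fin d → ℝ} (hz : z ∈ Set.Icc 0 1) :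
    Var[fun P => jdisc m d P (anchoredBox d z); jitterMeasure m d] ≤
      (m : ℝ) ^ d * (d / m) := by
  have hm : (0 : ℝ) < m := Nat.cast_pos.2 (NeZero.pos m)
  let y : Fin d → ℝ := fun i => ⌊m * z i⌋₊ / m
  have hy0 : 0 ≤ y := fun i => by positivity
  have hyz : y ≤ z := fun i => by
    rw [div_le_iff₀' hm]
    exact Nat.floor_le (mul_nonneg hm.le (hz.1 i))
  have hgap : ∀ i, z i - y i ≤ 1 / m := fun i => by
    rw [sub_le_iff_le_add', ← add_div, le_div_iff₀' hm]
    exact (Nat.lt_floor_add_one _).le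
  have hz_box : anchoredBox d z ⊆ anchoredBox d 1 := anchoredBox_mono hz.2
  rw [variance_jdisc (measurableSet_anchoredBox z) hz_box]
  -- A cube inside the box rounded down to the grid has no variance, so only the cubes along the
  -- boundary contribute.
  calc ∑ x, Var[centeredIndicator (jitterLaw m d x) (anchoredBox d z); jitterLaw m d x]
      ≤ ∑ x, (jitterLaw m d x).real (anchoredBox d z \ anchoredBox d y) :=
        Finset.sum_le_sum fun x _ => variance_centeredIndicator_le_sdiff
          (measurableSet_anchoredBox y) (measurableSet_anchoredBox z) (anchoredBox_mono hyz)
          (jitterLaw_real_anchoredBox_natCast_div x _)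
    _ = (m : ℝ) ^ d * (∏ i, z i - ∏ i, y i) := by
        rw [sum_jitterLaw_real (Set.sdiff_subset.trans hz_box),
          volume_real_anchoredBox_sdiff hy0 hyz]
    _ ≤ (m : ℝ) ^ d * ∑ _i : Fin d, 1 / (m : ℝ) := by
        gcongr
        exact (prod_sub_prod_le_sum_sub hy0 hyz hz.2).trans (Finset.sum_le_sum fun i _ => hgap i)
    _ = (m : ℝ) ^ d * (d / m) := by simp [div_eq_mul_inv]

end JitteredDiscrepancy

section MaxDiscrepancy

variable {m d : ℕ} {κ : Type*} {A : κ → Set (Fin d → ℝ)}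

/-- The largest absolute discrepancy among the sets of a family `A`. -/
def maxDisc (m d : ℕ) (A : κ → Set (Fin d → ℝ)) (P : (Fin d → Fin m) → Fin d → ℝ) : ℝ :=
  ⨆ i, |jdisc m d P (A i)|

lemma abs_jdisc_le_maxDisc [Finite κ] (A : κ → Set (Fin d → ℝ)) (P : (Fin d → Fin m) → Fin d → ℝ)
    (i : κ) : |jdisc m d P (A i)| ≤ maxDisc m d A P :=
  abs_le_iSup_abs (fun i => jdisc m d P (A i)) i

variable [NeZero m]

lemma integrable_maxDisc [Finite κ] (hA : ∀ i, MeasurableSet (A i))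
    (hA_sub : ∀ i, A i ⊆ anchoredBox d 1) : Integrable (maxDisc m d A) (jitterMeasure m d) :=
  integrable_iSup_abs fun i => integrable_jdisc (hA i) (hA_sub i)

lemma integral_maxDisc_le [Fintype κ] [Nonempty κ] {t V : ℝ} (ht0 : 0 < t) (ht1 : t ≤ 1)
    (hA : ∀ i, MeasurableSet (A i)) (hA_sub : ∀ i, A i ⊆ anchoredBox d 1)
    (hvar : ∀ i, Var[fun P => jdisc m d P (A i); jitterMeasure m d] ≤ V) :
    ∫ P, maxDisc m d A P ∂jitterMeasure m d ≤ (log (2 * Fintype.card κ) + t ^ 2 * V) / t := by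
  have hmgf : ∀ s : ℝ, |s| = t → ∀ i,
      mgf (fun P => jdisc m d P (A i)) (jitterMeasure m d) s ≤ exp (t ^ 2 * V) := by
    intro s hs i
    refine (mgf_jdisc_le (hs.trans_le ht1) (hA i) (hA_sub i)).trans (exp_le_exp.2 ?_)
    rw [← sq_abs s, hs]
    exact mul_le_mul_of_nonneg_left (hvar i) (sq_nonneg t)
  exact integral_iSup_abs_le ht0
    (fun i => integrable_exp_mul_jdisc t (hA i) (hA_sub i))
    (fun i => integrable_exp_mul_jdisc (-t) (hA i) (hA_sub i))
    (hmgf t (abs_of_pos ht0)) (hmgf (-t) (by rw [abs_neg, abs_of_pos ht0]))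

lemma integral_maxDisc_le_mul [Fintype κ] [Nonempty κ] {n h w : ℝ} (hh : 0 < h) (hhw : h ≤ 2 * w)
    (hA : ∀ i, MeasurableSet (A i)) (hA_sub : ∀ i, A i ⊆ anchoredBox d 1)
    (hcard : log (2 * Fintype.card κ) ≤ 2 * n * h ^ 2)
    (hvar : ∀ i, Var[fun P => jdisc m d P (A i); jitterMeasure m d] ≤ w ^ 2) :
    ∫ P, maxDisc m d A P ∂jitterMeasure m d ≤ (4 * n + 1 / 2) * (h * w) := by
  have hw : 0 < 2 * w := hh.trans_le hhw
  have ht : 0 < h / (2 * w) := by positivity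
  refine (integral_maxDisc_le ht ((div_le_one hw).2 hhw) hA hA_sub hvar).trans ?_
  rw [div_le_iff₀ ht]
  calc log (2 * Fintype.card κ) + (h / (2 * w)) ^ 2 * w ^ 2
      ≤ 2 * n * h ^ 2 + (h / (2 * w)) ^ 2 * w ^ 2 := by gcongr
    _ = (4 * n + 1 / 2) * (h * w) * (h / (2 * w)) := by
        have : w ≠ 0 := by rintro rfl; simp at hw
        field_simp
        ring

end MaxDiscrepancy

section Chaining

variable {m d : ℕ}

/-- The difference of the anchored boxes spanned by the corners of a bracket. -/
def bracketGap (p : (Fin d → ℝ) × (Fin d → ℝ)) : Set (Fin d → ℝ) :=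
  anchoredBox d p.2 \ anchoredBox d p.1

/-- The error committed in replacing `anchoredBox d y` by the larger box of the bracket of `B`
around `y`. -/
def upperGap (B : Finset ((Fin d → ℝ) × (Fin d → ℝ))) (y : Fin d → ℝ) : Set (Fin d → ℝ) :=
  anchoredBox d (bracketOf B y).2 \ anchoredBox d y

lemma measurableSet_bracketGap (p : (Fin d → ℝ) × (Fin d → ℝ)) : MeasurableSet (bracketGap p) :=
  (measurableSet_anchoredBox _).diff (measurableSet_anchoredBox _)

lemma measurableSet_upperGap (B : Finset ((Fin d → ℝ) × (Fin d → ℝ))) (y : Fin d → ℝ) :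
    MeasurableSet (upperGap B y) :=
  (measurableSet_anchoredBox _).diff (measurableSet_anchoredBox _)

lemma abs_jdisc_anchoredBox_le (P : (Fin d → Fin m) → Fin d → ℝ)
    {B : Finset ((Fin d → ℝ) × (Fin d → ℝ))} (hy : y ≤ (bracketOf B y).2) :
    |jdisc m d P (anchoredBox d y)| ≤
      |jdisc m d P (anchoredBox d (bracketOf B y).2)| + |jdisc m d P (upperGap B y)| := by
  have hsdiff : jdisc m d P (upperGap B y) =
      jdisc m d P (anchoredBox d (bracketOf B y).2) - jdisc m d P (anchoredBox d y) :=
    jdisc_sdiff P (anchoredBox_mono hy) (measurableSet_anchoredBox y) (volume_anchoredBox_ne_top _)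
  rw [← sub_sub_cancel (jdisc m d P (anchoredBox d (bracketOf B y).2))
    (jdisc m d P (anchoredBox d y)), ← hsdiff]
  exact abs_sub _ _

section Bracket

variable {δ : ℝ} {B : Finset ((Fin d → ℝ) × (Fin d → ℝ))} {p : (Fin d → ℝ) × (Fin d → ℝ)}
  {y : Fin d → ℝ}

namespace IsBracketingCover

lemma bracketGap_subset (hB : IsBracketingCover δ B) (hp : p ∈ B) :
    bracketGap p ⊆ anchoredBox d 1 :=
  Set.sdiff_subset.trans (anchoredBox_mono (hB.le_one p hp))

lemma volume_real_bracketGap_le (hB : IsBracketingCover δ B) (hp : p ∈ B) :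
    volume.real (bracketGap p) ≤ δ := by
  rw [bracketGap, volume_real_anchoredBox_sdiff (hB.nonneg p hp) (hB.fst_le_snd p hp)]
  exact hB.prod_sub_prod_le p hp

lemma upperGap_subset_bracketGap (hB : IsBracketingCover δ B) (hy : y ∈ Set.Icc 0 1) :
    upperGap B y ⊆ bracketGap (bracketOf B y) :=
  Set.sdiff_subset_sdiff_right (anchoredBox_mono (hB.mem_Icc_bracketOf hy).1)

lemma upperGap_subset (hB : IsBracketingCover δ B) (hy : y ∈ Set.Icc 0 1) :
    upperGap B y ⊆ anchoredBox d 1 :=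
  (hB.upperGap_subset_bracketGap hy).trans (hB.bracketGap_subset (hB.bracketOf_mem hy))

lemma volume_real_upperGap_le (hB : IsBracketingCover δ B) (hy : y ∈ Set.Icc 0 1) :
    volume.real (upperGap B y) ≤ δ := by
  have hp := hB.bracketOf_mem hy
  refine (measureReal_mono (hB.upperGap_subset_bracketGap hy) ?_).trans
    (hB.volume_real_bracketGap_le hp)
  exact measure_ne_top_of_subset Set.sdiff_subset (volume_anchoredBox_ne_top _)

lemma variance_jdisc_bracketGap_le [NeZero m] (hB : IsBracketingCover δ B) (hp : p ∈ B) :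
    Var[fun P => jdisc m d P (bracketGap p); jitterMeasure m d] ≤ (m : ℝ) ^ d * δ :=
  (variance_jdisc_le (measurableSet_bracketGap p) (hB.bracketGap_subset hp)).trans
    (mul_le_mul_of_nonneg_left (hB.volume_real_bracketGap_le hp) (by positivity))

lemma variance_jdisc_upperGap_le [NeZero m] (hB : IsBracketingCover δ B)
    (hy : y ∈ Set.Icc 0 1) :
    Var[fun P => jdisc m d P (upperGap B y); jitterMeasure m d] ≤ (m : ℝ) ^ d * δ :=
  (variance_jdisc_le (measurableSet_upperGap B y) (hB.upperGap_subset hy)).trans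
    (mul_le_mul_of_nonneg_left (hB.volume_real_upperGap_le hy) (by positivity))

lemma abs_jdisc_upperGap_le (hB : IsBracketingCover δ B) (P : (Fin d → Fin m) → Fin d → ℝ)
    (hy : y ∈ Set.Icc 0 1) :
    |jdisc m d P (upperGap B y)| ≤
      maxDisc m d (fun p : B => bracketGap p.1) P + (m : ℝ) ^ d * δ := by
  have hp := hB.bracketOf_mem hy
  refine (abs_jdisc_le_abs_jdisc_add P (hB.upperGap_subset_bracketGap hy)
    (measure_ne_top_of_subset Set.sdiff_subset (volume_anchoredBox_ne_top _))).trans ?_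
  gcongr
  · exact abs_jdisc_le_maxDisc (fun p : B => bracketGap p.1) P ⟨_, hp⟩
  · exact hB.volume_real_bracketGap_le hp

section Expectation

variable [NeZero m] {h n w δ' : ℝ} {B' : Finset ((Fin d → ℝ) × (Fin d → ℝ))}

lemma integrable_maxDisc_anchoredBox_snd (hB : IsBracketingCover δ B) :
    Integrable (maxDisc m d fun p : B => anchoredBox d p.1.2) (jitterMeasure m d) :=
  integrable_maxDisc (fun _ => measurableSet_anchoredBox _)
    fun p => anchoredBox_mono (hB.le_one p.1 p.2)

lemma integrable_maxDisc_upperGap (hB : IsBracketingCover δ B) (hB' : IsBracketingCover δ' B') :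
    Integrable (maxDisc m d fun p : B' => upperGap B p.1.2) (jitterMeasure m d) :=
  integrable_maxDisc (fun _ => measurableSet_upperGap _ _)
    fun p => hB.upperGap_subset (hB'.snd_mem_Icc p.2)

lemma integrable_maxDisc_bracketGap (hB : IsBracketingCover δ B) :
    Integrable (maxDisc m d fun p : B => bracketGap p.1) (jitterMeasure m d) :=
  integrable_maxDisc (fun _ => measurableSet_bracketGap _) fun p => hB.bracketGap_subset p.2

lemma integral_maxDisc_anchoredBox_snd_le (hB : IsBracketingCover δ B) (hh : 0 < h)
    (hhw : h ≤ 2 * w) (hcard : log (2 * B.card) ≤ 2 * n * h ^ 2)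
    (hw : (m : ℝ) ^ d * (d / m) ≤ w ^ 2) :
    ∫ P, maxDisc m d (fun p : B => anchoredBox d p.1.2) P ∂jitterMeasure m d ≤
      (4 * n + 1 / 2) * (h * w) :=
  have := hB.nonempty.to_subtype
  integral_maxDisc_le_mul hh hhw (fun _ => measurableSet_anchoredBox _)
    (fun p => anchoredBox_mono (hB.le_one p.1 p.2)) (by simpa using hcard)
    fun p => (variance_jdisc_anchoredBox_le (hB.snd_mem_Icc p.2)).trans hw

lemma integral_maxDisc_upperGap_le (hB : IsBracketingCover δ B) (hB' : IsBracketingCover δ' B')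
    (hh : 0 < h) (hhw : h ≤ 2 * w) (hcard : log (2 * B'.card) ≤ 2 * n * h ^ 2)
    (hw : (m : ℝ) ^ d * δ ≤ w ^ 2) :
    ∫ P, maxDisc m d (fun p : B' => upperGap B p.1.2) P ∂jitterMeasure m d ≤
      (4 * n + 1 / 2) * (h * w) :=
  have := hB'.nonempty.to_subtype
  integral_maxDisc_le_mul hh hhw (fun _ => measurableSet_upperGap _ _)
    (fun p => hB.upperGap_subset (hB'.snd_mem_Icc p.2)) (by simpa using hcard)
    fun p => (hB.variance_jdisc_upperGap_le (hB'.snd_mem_Icc p.2)).trans hw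

lemma integral_maxDisc_bracketGap_le (hB : IsBracketingCover δ B) (hh : 0 < h)
    (hhw : h ≤ 2 * w) (hcard : log (2 * B.card) ≤ 2 * n * h ^ 2)
    (hw : (m : ℝ) ^ d * δ ≤ w ^ 2) :
    ∫ P, maxDisc m d (fun p : B => bracketGap p.1) P ∂jitterMeasure m d ≤
      (4 * n + 1 / 2) * (h * w) :=
  have := hB.nonempty.to_subtype
  integral_maxDisc_le_mul hh hhw (fun _ => measurableSet_bracketGap _)
    (fun p => hB.bracketGap_subset p.2) (by simpa using hcard)
    fun p => (hB.variance_jdisc_bracketGap_le p.2).trans hw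

end Expectation

end IsBracketingCover

end Bracket

variable {δ : ℕ → ℝ} {B : ℕ → Finset ((Fin d → ℝ) × (Fin d → ℝ))} {h v : ℝ}

lemma abs_jdisc_anchoredBox_snd_le_sum (hB : ∀ k, IsBracketingCover (δ k) (B k))
    (P : (Fin d → Fin m) → Fin d → ℝ) (K : ℕ) {p : (Fin d → ℝ) × (Fin d → ℝ)} (hp : p ∈ B K) :
    |jdisc m d P (anchoredBox d p.2)| ≤
      maxDisc m d (fun p : B 0 => anchoredBox d p.1.2) P +
        ∑ k ∈ Finset.range K, maxDisc m d (fun p : B (k + 1) => upperGap (B k) p.1.2) P := by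
  induction K generalizing p with
  | zero =>
    simpa using abs_jdisc_le_maxDisc (fun p : B 0 => anchoredBox d p.1.2) P ⟨p, hp⟩
  | succ K ih =>
    have hp_mem : p.2 ∈ Set.Icc 0 1 := (hB (K + 1)).snd_mem_Icc hp
    rw [Finset.sum_range_succ, ← add_assoc]
    exact (abs_jdisc_anchoredBox_le P ((hB K).mem_Icc_bracketOf hp_mem).2).trans
      (add_le_add (ih ((hB K).bracketOf_mem hp_mem))
        (abs_jdisc_le_maxDisc (fun p : B (K + 1) => upperGap (B K) p.1.2) P ⟨p, hp⟩))

/-- The bound on the star discrepancy, up to the volume of the brackets of `B K`, obtained by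
chaining along the brackets of `B K, …, B 0` around a point. -/
def chainingBound (m d : ℕ) (B : ℕ → Finset ((Fin d → ℝ) × (Fin d → ℝ))) (K : ℕ)
    (P : (Fin d → Fin m) → Fin d → ℝ) : ℝ :=
  maxDisc m d (fun p : B 0 => anchoredBox d p.1.2) P +
    ∑ k ∈ Finset.range K, maxDisc m d (fun p : B (k + 1) => upperGap (B k) p.1.2) P +
    maxDisc m d (fun p : B K => bracketGap p.1) P

lemma starDisc_le_chainingBound_add (hB : ∀ k, IsBracketingCover (δ k) (B k)) (K : ℕ)
    (P : (Fin d → Fin m) → Fin d → ℝ) :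
    starDisc m d P ≤ chainingBound m d B K P + (m : ℝ) ^ d * δ K := by
  have : Nonempty {y : Fin d → ℝ // ∀ i, y i ∈ Set.Ico (0 : ℝ) 1} := ⟨0, by simp⟩
  refine ciSup_le fun ⟨y, hy⟩ => ?_
  have hy_mem : y ∈ Set.Icc 0 1 := ⟨fun i => (hy i).1, fun i => (hy i).2.le⟩
  rw [chainingBound, add_assoc]
  exact (abs_jdisc_anchoredBox_le P ((hB K).mem_Icc_bracketOf hy_mem).2).trans
    (add_le_add (abs_jdisc_anchoredBox_snd_le_sum hB P K ((hB K).bracketOf_mem hy_mem))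
      ((hB K).abs_jdisc_upperGap_le P hy_mem))

variable [NeZero m]

lemma integrable_chainingBound (hB : ∀ k, IsBracketingCover (δ k) (B k)) (K : ℕ) :
    Integrable (chainingBound m d B K) (jitterMeasure m d) :=
  ((hB 0).integrable_maxDisc_anchoredBox_snd.add (integrable_finsetSum _ fun k _ =>
    (hB k).integrable_maxDisc_upperGap (hB (k + 1)))).add (hB K).integrable_maxDisc_bracketGap

lemma integral_chainingBound (hB : ∀ k, IsBracketingCover (δ k) (B k)) (K : ℕ) :
    ∫ P, chainingBound m d B K P ∂jitterMeasure m d =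
      ∫ P, maxDisc m d (fun p : B 0 => anchoredBox d p.1.2) P ∂jitterMeasure m d +
      ∑ k ∈ Finset.range K,
        ∫ P, maxDisc m d (fun p : B (k + 1) => upperGap (B k) p.1.2) P ∂jitterMeasure m d +
      ∫ P, maxDisc m d (fun p : B K => bracketGap p.1) P ∂jitterMeasure m d := by
  have hbase := (hB 0).integrable_maxDisc_anchoredBox_snd (m := m)
  have hlink := fun k (_ : k ∈ Finset.range K) =>
    (hB k).integrable_maxDisc_upperGap (m := m) (hB (k + 1))
  have hlinks := integrable_finsetSum _ hlink
  rw [← integral_finsetSum _ hlink, ← integral_add hbase hlinks]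
  exact integral_add (hbase.add hlinks) (hB K).integrable_maxDisc_bracketGap

lemma sum_range_div_two_pow (K : ℕ) :
    ∑ k ∈ Finset.range K, (4 * ((k : ℝ) + 2) + 1 / 2) / 2 ^ k = 25 - (8 * K + 25) / 2 ^ K := by
  induction K with
  | zero => norm_num
  | succ K ih =>
    rw [Finset.sum_range_succ, ih]
    push_cast
    field_simp
    ring

lemma integral_chainingBound_le (hB : ∀ k, IsBracketingCover (δ k) (B k)) (hh : 0 < h)
    (hv : (m : ℝ) ^ d * (d / m) ≤ v ^ 2) (hδ : ∀ k, (m : ℝ) ^ d * δ k ≤ (v / 2 ^ k) ^ 2)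
    (hcard : ∀ k, log (2 * (B k).card) ≤ 2 * (k + 1) * h ^ 2) {K : ℕ}
    (hK : ∀ k ≤ K, h ≤ 2 * (v / 2 ^ k)) :
    ∫ P, chainingBound m d B K P ∂jitterMeasure m d ≤ 59 / 2 * (h * v) := by
  have hbase := (hB 0).integral_maxDisc_anchoredBox_snd_le hh (by simpa using hK 0 K.zero_le)
    (hcard 0) hv
  have hlinks := Finset.sum_le_sum fun k (hk : k ∈ Finset.range K) =>
    (hB k).integral_maxDisc_upperGap_le (hB (k + 1)) hh (hK k (Finset.mem_range.1 hk).le)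
      (hcard (k + 1)) (hδ k)
  have hlast := (hB K).integral_maxDisc_bracketGap_le hh (hK K le_rfl) (hcard K) (hδ K)
  have hgeom : ∑ k ∈ Finset.range K, (4 * (((k + 1 : ℕ) : ℝ) + 1) + 1 / 2) * (h * (v / 2 ^ k)) =
      (25 - (8 * K + 25) / 2 ^ K) * (h * v) := by
    rw [← sum_range_div_two_pow, Finset.sum_mul]
    refine Finset.sum_congr rfl fun k _ => ?_
    push_cast
    ring
  have hv_nonneg : 0 ≤ h * v := by
    have := hK 0 K.zero_le
    have : 0 ≤ v := by norm_num at this; linarith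
    positivity
  rw [integral_chainingBound hB]
  calc _ ≤ (4 * (((0 : ℕ) : ℝ) + 1) + 1 / 2) * (h * v) + (25 - (8 * K + 25) / 2 ^ K) * (h * v) +
        (4 * ((K : ℝ) + 1) + 1 / 2) * (h * (v / 2 ^ K)) :=
        add_le_add (add_le_add hbase (hlinks.trans_eq hgeom)) hlast
    _ = 59 / 2 * (h * v) - (4 * K + 41 / 2) / 2 ^ K * (h * v) := by
      push_cast
      field_simp
      ring
    _ ≤ 59 / 2 * (h * v) := sub_le_self _ (by positivity)

theorem expStarDisc_le_of_isBracketingCover (hB : ∀ k, IsBracketingCover (δ k) (B k))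
    (hh : 0 < h) (hhv : h ≤ 2 * v) (hv : (m : ℝ) ^ d * (d / m) ≤ v ^ 2)
    (hδ : ∀ k, (m : ℝ) ^ d * δ k ≤ (v / 2 ^ k) ^ 2)
    (hcard : ∀ k, log (2 * (B k).card) ≤ 2 * (k + 1) * h ^ 2) :
    expStarDisc m d ≤ 61 / 2 * (h * v) := by
  have hv0 : 0 < v := by linarith
  -- Chaining stops at the scale `v / 2 ^ K` comparable to `h`, where the deterministic error
  -- `(v / 2 ^ K) ^ 2` has dropped below `h * v`.
  obtain ⟨K, hK_le, hK_lt⟩ := exists_nat_pow_near (one_le_div₀ hh |>.2 hhv) one_lt_two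
  rw [le_div_iff₀ hh] at hK_le
  rw [div_lt_iff₀ hh, pow_succ, mul_right_comm, mul_comm 2 v, mul_lt_mul_iff_left₀ two_pos,
    ← div_lt_iff₀' (by positivity)] at hK_lt
  have hscale : ∀ k ≤ K, h ≤ 2 * (v / 2 ^ k) := fun k hk => by
    rw [← mul_div_assoc, le_div_iff₀' (by positivity)]
    exact le_trans (by gcongr; norm_num) hK_le
  have herror : (m : ℝ) ^ d * δ K ≤ h * v := calc
    (m : ℝ) ^ d * δ K ≤ v / 2 ^ K * (v / 2 ^ K) := (hδ K).trans_eq (sq _)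
    _ ≤ h * v := mul_le_mul hK_lt.le (div_le_self hv0.le (one_le_pow₀ one_le_two)) (by positivity)
        hh.le
  have hint := integrable_chainingBound (m := m) hB K
  calc expStarDisc m d
      ≤ ∫ P, (chainingBound m d B K P + (m : ℝ) ^ d * δ K) ∂jitterMeasure m d :=
        integral_mono_of_nonneg (.of_forall fun P => Real.iSup_nonneg fun _ => abs_nonneg _)
          (hint.add (integrable_const _)) (.of_forall (starDisc_le_chainingBound_add hB K))
    _ = ∫ P, chainingBound m d B K P ∂jitterMeasure m d + (m : ℝ) ^ d * δ K := by
        rw [integral_add hint (integrable_const _)]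
        simp
    _ ≤ 59 / 2 * (h * v) + h * v :=
        add_le_add (integral_chainingBound_le hB hh hv hδ hcard hscale) herror
    _ = 61 / 2 * (h * v) := by ring

end Chaining

section JitteredSampling

lemma log_two_mul_le_of_le_pow {d : ℕ} {c r : ℝ} (hd : d ≠ 0) (hr : 1 ≤ r) (hc : 0 < c) (k : ℕ)
    (hcard : c ≤ (exp 1 * (3 / (1 / (r * 4 ^ k)) ^ 2)) ^ d) :
    log (2 * c) ≤ 2 * (k + 1) * (d * log (4 * exp 1 * r)) := by
  have : 0 < r := by linarith
  have he : 2 ≤ exp 1 := by linarith [add_one_le_exp 1]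
  have hbase : 2 * (exp 1 * (3 / (1 / (r * 4 ^ k)) ^ 2)) ≤ (4 * exp 1 * r) ^ (2 * (k + 1)) :=
    calc 2 * (exp 1 * (3 / (1 / (r * 4 ^ k)) ^ 2)) = 6 * exp 1 * r ^ 2 * 4 ^ (2 * k) := by
          field_simp
          ring
      _ ≤ (4 * exp 1 * r) ^ 2 * (4 * exp 1 * r) ^ (2 * k) := by
          gcongr
          · nlinarith [sq_nonneg r]
          · nlinarith
      _ = (4 * exp 1 * r) ^ (2 * (k + 1)) := by ring
  calc log (2 * c) ≤ log (((4 * exp 1 * r) ^ (2 * (k + 1))) ^ d) := by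
        refine log_le_log (by positivity) ?_
        calc 2 * c ≤ 2 ^ d * (exp 1 * (3 / (1 / (r * 4 ^ k)) ^ 2)) ^ d :=
              mul_le_mul (le_self_pow₀ one_le_two hd) hcard hc.le (by positivity)
          _ ≤ ((4 * exp 1 * r) ^ (2 * (k + 1))) ^ d := by
              rw [← mul_pow]
              gcongr
    _ = 2 * (k + 1) * (d * log (4 * exp 1 * r)) := by
        rw [log_pow, log_pow]
        push_cast
        ring

lemma log_exp_one_mul_le {x : ℝ} (hx : 0 < x) : log (exp 1 * x) ≤ x := by
  rw [log_mul (exp_pos 1).ne' hx.ne', log_exp]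
  linarith [log_le_sub_one_of_pos hx]

lemma mul_log_four_mul_exp_mul_div_le {m d : ℕ} (hd : 2 ≤ d) (hm : 0 < m) :
    d * log (4 * exp 1 * (m / d)) ≤ 4 * ((m : ℝ) ^ d / (m / d)) := by
  have : (0 : ℝ) < m := by exact_mod_cast hm
  calc d * log (4 * exp 1 * (m / d)) = d * log (exp 1 * (4 * (m / d))) := by ring_nf
    _ ≤ d * (4 * (m / d)) := by
        gcongr
        exact log_exp_one_mul_le (by positivity)
    _ = 4 * ((m : ℝ) ^ 2 / (m / 1)) := by field_simp
    _ ≤ 4 * ((m : ℝ) ^ d / (m / d)) := by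
        gcongr
        · exact_mod_cast hm
        · exact_mod_cast (by omega : 1 ≤ d)

theorem expStarDisc_le {m d : ℕ} (hd : 2 ≤ d) (hdm : d ≤ m) :
    expStarDisc m d ≤
      61 / 2 * (√(d * log (4 * exp 1 * (m / d))) * √((m : ℝ) ^ d / (m / d))) := by
  have : (0 : ℝ) < m := by exact_mod_cast (by omega : 0 < m)
  have : NeZero m := ⟨by omega⟩
  have : NeZero d := ⟨by omega⟩
  set r : ℝ := m / d
  have hr : 1 ≤ r := (one_le_div₀ (by positivity)).2 (by exact_mod_cast hdm)
  have hlog : 0 < log (4 * exp 1 * r) :=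
    log_pos (by nlinarith [one_le_exp zero_le_one])
  choose B hB hcard using fun k : ℕ =>
    exists_isBracketingCover (Fin d) (δ := 1 / (r * 4 ^ k)) (by positivity)
      (div_le_one_of_le₀ (one_le_mul_of_one_le_of_one_le hr (one_le_pow₀ (by norm_num)))
        (by positivity))
  refine expStarDisc_le_of_isBracketingCover hB (sqrt_pos.2 (by positivity)) ?_ ?_
    (fun k => ?_) fun k => ?_
  · rw [sqrt_le_left (by positivity), mul_pow, sq_sqrt (by positivity)]
    exact (mul_log_four_mul_exp_mul_div_le hd (by omega)).trans_eq (by norm_num [r])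
  · rw [sq_sqrt (by positivity), div_div_eq_mul_div, mul_div_assoc]
  · rw [div_pow, sq_sqrt (by positivity), ← pow_mul, mul_comm k, pow_mul, mul_one_div, div_div]
    norm_num
  · rw [sq_sqrt (by positivity)]
    exact log_two_mul_le_of_le_pow (by omega) hr (by exact_mod_cast (hB k).nonempty.card_pos) k
      (by simpa using hcard k)

end JitteredSampling

/-- For `m ≥ d ≥ 2` and `N = m^d`, a jittered sampling point set `P` of `N` points in `[0,1)^d`
satisfies `E[D*(P)] ≤ 60.9984·√(d·m^d)·(√(ln(4e·m/d)) + 2.9599)/√(m/d)`. -/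
theorem jittered_sampling_upper_bound (m d : ℕ) (hd : 2 ≤ d) (hmd : d ≤ m) :
    expStarDisc m d ≤
      60.9984 * Real.sqrt ((d : ℝ) * (m : ℝ) ^ d) *
        (Real.sqrt (Real.log (4 * Real.exp 1 * m / d)) + 2.9599) / Real.sqrt ((m : ℝ) / d) := by
  have hleading : √(d * log (4 * exp 1 * (m / d))) * √((m : ℝ) ^ d / (m / d)) =
      √(d * (m : ℝ) ^ d) * √(log (4 * exp 1 * m / d)) / √(m / d) := by
    rw [sqrt_mul (by positivity), sqrt_div (by positivity), sqrt_mul (by positivity) ((m : ℝ) ^ d),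
      mul_div_assoc (4 * exp 1)]
    ring
  calc expStarDisc m d ≤ 61 / 2 * (√(d * log (4 * exp 1 * (m / d))) * √((m : ℝ) ^ d / (m / d))) :=
        expStarDisc_le hd hmd
    _ = 30.5 * √(d * (m : ℝ) ^ d) * √(log (4 * exp 1 * m / d)) / √(m / d) := by
        rw [hleading]
        ring
    _ ≤ 60.9984 * √(d * (m : ℝ) ^ d) * (√(log (4 * exp 1 * m / d)) + 2.9599) / √(m / d) := by
        gcongr <;> linarith [sqrt_nonneg (log (4 * exp 1 * m / d))]
end
end

section
/- Let n ≥ 1 be an integer and X a random variable binomially distributed with parameters n and 1/2. Let α ≥ 0 be such that n/2 + α is an integer and α ≤ n/2. Then Pr[X = n/2 + α] ≥ (1/(e^(1/6)·√(2π))) · n^(−1/2) · exp( −2α²/n − 4α³/n² ). -/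
open MeasureTheory ProbabilityTheory Real

/-!
Stirling's formula bounds `n.choose k` below by a multiple of `n ^ (-1/2) * exp (n * H (k / n))`,
where `H` is the binary entropy, and `H (1/2 + δ) ≥ log 2 - 2 * δ ^ 2 - 2 * |δ| ^ 3`; take
`δ = α / n`. The cruder factorial bound `n! ≤ e * √n * (n / e) ^ n` suffices: it gives the
prefactor `2 * √(2 * π) / e ^ 2`, which is at least `1 / (e ^ (1/6) * √(2 * π))`.
-/

lemma one_add_mul_log_one_add_le {x : ℝ} (hx : 0 ≤ x) :
    (1 + x) * log (1 + x) ≤ x + x ^ 2 / 2 := by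
  have h_pos : 0 < 1 + x := by linarith
  have h_log : log (1 + x) ≤ (1 + x - (1 + x)⁻¹) / 2 := by
    rw [← sinh_log h_pos]
    exact self_le_sinh_iff.2 (log_nonneg (by linarith))
  calc (1 + x) * log (1 + x) ≤ (1 + x) * ((1 + x - (1 + x)⁻¹) / 2) := by gcongr
    _ = x + x ^ 2 / 2 := by field_simp; ring

lemma log_one_sub_le {x : ℝ} (hx0 : 0 ≤ x) (hx1 : x < 1) : log (1 - x) ≤ -x - x ^ 2 / 2 := by
  have h_sum := sum_le_hasSum (Finset.range 2) (fun i _ ↦ by positivity)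
    (hasSum_pow_div_log_of_abs_lt_one (abs_lt.2 ⟨by linarith, hx1⟩))
  norm_num [Finset.sum_range_succ] at h_sum
  linarith

lemma one_sub_mul_log_one_sub_le {x : ℝ} (hx0 : 0 ≤ x) (hx1 : x ≤ 1) :
    (1 - x) * log (1 - x) ≤ -x + x ^ 2 / 2 + x ^ 3 / 2 := by
  rcases hx1.eq_or_lt with rfl | hx1
  · norm_num
  calc (1 - x) * log (1 - x) ≤ (1 - x) * (-x - x ^ 2 / 2) := by
        have : 0 ≤ 1 - x := by linarith
        gcongr
        exact log_one_sub_le hx0 hx1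
    _ = -x + x ^ 2 / 2 + x ^ 3 / 2 := by ring

lemma div_two_mul_log_inv_div_two (y : ℝ) :
    y / 2 * log (y / 2)⁻¹ = y / 2 * log 2 - y * log y / 2 := by
  rcases eq_or_ne y 0 with rfl | hy
  · simp
  rw [inv_div, log_div two_ne_zero hy]
  ring

lemma binEntropy_one_add_div_two (x : ℝ) :
    binEntropy ((1 + x) / 2) =
      log 2 - ((1 + x) * log (1 + x) + (1 - x) * log (1 - x)) / 2 := by
  rw [binEntropy, show 1 - (1 + x) / 2 = (1 - x) / 2 by ring, div_two_mul_log_inv_div_two,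
    div_two_mul_log_inv_div_two]
  ring

lemma log_two_sub_le_binEntropy {δ : ℝ} (hδ : |δ| ≤ 1 / 2) :
    log 2 - 2 * δ ^ 2 - 2 * |δ| ^ 3 ≤ binEntropy (1 / 2 + δ) := by
  have h_symm : binEntropy (1 / 2 + δ) = binEntropy ((1 + 2 * |δ|) / 2) := by
    rcases abs_choice δ with h | h <;> rw [h]
    · ring_nf
    · rw [one_div, binEntropy_two_inv_add]
      ring_nf
  have h_add := one_add_mul_log_one_add_le (x := 2 * |δ|) (by positivity)
  have h_sub := one_sub_mul_log_one_sub_le (x := 2 * |δ|) (by positivity) (by linarith)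
  rw [h_symm, binEntropy_one_add_div_two, ← sq_abs]
  linarith

lemma pow_mul_pow_mul_exp_binEntropy (k m : ℕ) :
    (k : ℝ) ^ k * (m : ℝ) ^ m * exp ((k + m) * binEntropy (k / (k + m))) =
      ((k : ℝ) + m) ^ (k + m) := by
  rcases k.eq_zero_or_pos with rfl | hk
  · simp
  rcases m.eq_zero_or_pos with rfl | hm
  · simp [hk.ne']
  have h_exp : ((k : ℝ) + m) * binEntropy (k / (k + m)) =
      k * log ((k + m) / k) + m * log ((k + m) / m) := by
    rw [binEntropy, show 1 - (k : ℝ) / (k + m) = m / (k + m) by field_simp; ring, inv_div, inv_div]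
    field_simp
  rw [h_exp, exp_add, exp_nat_mul, exp_nat_mul, exp_log (by positivity), exp_log (by positivity),
    div_pow, div_pow, pow_add]
  field_simp

open scoped Nat in
lemma factorial_le_exp_one_mul_sqrt_mul_pow {n : ℕ} (hn : 0 < n) :
    (n ! : ℝ) ≤ exp 1 * √n * (n / exp 1) ^ n := by
  have h_anti : Stirling.stirlingSeq n ≤ Stirling.stirlingSeq 1 := by
    simpa [Nat.sub_add_cancel hn] using Stirling.stirlingSeq'_antitone (Nat.zero_le (n - 1))
  rw [Stirling.stirlingSeq_one, Stirling.stirlingSeq, div_le_iff₀ (by positivity),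
    sqrt_mul zero_le_two] at h_anti
  refine h_anti.trans_eq ?_
  field_simp

open scoped Nat in
lemma sqrt_div_mul_exp_binEntropy_le_add_choose {k m : ℕ} (hk : 0 < k) (hm : 0 < m) :
    √(2 * π) / exp 1 ^ 2 * (√(k + m) / (√k * √m)) * exp ((k + m) * binEntropy (k / (k + m))) ≤
      ((k + m).choose k : ℝ) := by
  calc √(2 * π) / exp 1 ^ 2 * (√(k + m) / (√k * √m)) * exp ((k + m) * binEntropy (k / (k + m)))
      = √(2 * π * (k + m : ℕ)) * ((k + m : ℕ) / exp 1) ^ (k + m) /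
          ((exp 1 * √k * (k / exp 1) ^ k) * (exp 1 * √m * (m / exp 1) ^ m)) := by
        rw [Nat.cast_add, sqrt_mul (by positivity : 0 ≤ 2 * π), div_pow, div_pow, div_pow,
          ← pow_mul_pow_mul_exp_binEntropy, pow_add]
        field_simp
    _ ≤ (k + m)! / (k ! * m !) := by
        gcongr
        · exact Stirling.le_factorial_stirling _
        · exact factorial_le_exp_one_mul_sqrt_mul_pow hk
        · exact factorial_le_exp_one_mul_sqrt_mul_pow hm
    _ = ((k + m).choose k : ℝ) := (Nat.cast_add_choose ℝ).symm

lemma two_mul_sqrt_two_pi_div_exp_one_sq_le_one : 2 * √(2 * π) / exp 1 ^ 2 ≤ 1 := by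
  have h_sqrt : √(2 * π) ≤ 3 := sqrt_le_iff.2 ⟨by norm_num, by linarith [pi_lt_four]⟩
  have h_exp : 2.7 ^ 2 ≤ exp 1 ^ 2 := by
    gcongr
    linarith [exp_one_gt_d9]
  rw [div_le_one (by positivity)]
  linarith

lemma inv_sqrt_mul_exp_binEntropy_le_choose {n k : ℕ} (hn : 0 < n) (hkn : k ≤ n) :
    2 * √(2 * π) / exp 1 ^ 2 * (√n)⁻¹ * exp (n * binEntropy (k / n)) ≤ (n.choose k : ℝ) := by
  have h_prefactor : 2 * √(2 * π) / exp 1 ^ 2 * (√n)⁻¹ ≤ 1 :=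
    mul_le_one₀ two_mul_sqrt_two_pi_div_exp_one_sq_le_one (by positivity)
      (inv_le_one_of_one_le₀ (one_le_sqrt.2 (Nat.one_le_cast.2 hn)))
  rcases k.eq_zero_or_pos with rfl | hk
  · simpa using h_prefactor
  rcases hkn.eq_or_lt with rfl | hkn
  · simpa [hn.ne'] using h_prefactor
  obtain ⟨m, rfl⟩ := Nat.exists_eq_add_of_le hkn.le
  have hm : 0 < m := by lia
  have h_amgm : √k * √m ≤ ((k : ℝ) + m) / 2 := by
    have := two_mul_le_add_sq √(k : ℝ) √(m : ℝ)
    rw [sq_sqrt (by positivity), sq_sqrt (by positivity)] at this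
    linarith
  refine le_trans ?_ (sqrt_div_mul_exp_binEntropy_le_add_choose hk hm)
  push_cast
  gcongr ?_ * _
  calc 2 * √(2 * π) / exp 1 ^ 2 * (√((k : ℝ) + m))⁻¹
      = √(2 * π) / exp 1 ^ 2 * (√(k + m) / ((k + m) / 2)) := by
        rw [← one_div √((k : ℝ) + m), ← sqrt_div_self', div_div_eq_mul_div]
        ring
    _ ≤ √(2 * π) / exp 1 ^ 2 * (√(k + m) / (√k * √m)) := by gcongr

lemma inv_sqrt_mul_exp_le_choose_div_two_pow {n k : ℕ} (hn : 0 < n) (hkn : k ≤ n) {α : ℝ}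
    (hα : (k : ℝ) = n / 2 + α) :
    2 * √(2 * π) / exp 1 ^ 2 * (√n)⁻¹ * exp (-2 * α ^ 2 / n - 2 * |α| ^ 3 / (n : ℝ) ^ 2) ≤
      (n.choose k : ℝ) / 2 ^ n := by
  have h_kn : (k : ℝ) / n = 1 / 2 + α / n := by rw [hα]; field_simp
  have h_abs : |α / n| ≤ 1 / 2 := by
    have h_le_one : (k : ℝ) / n ≤ 1 := div_le_one_of_le₀ (Nat.cast_le.2 hkn) n.cast_nonneg
    have h_nonneg : 0 ≤ (k : ℝ) / n := by positivity
    exact abs_le.2 ⟨by linarith, by linarith⟩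
  have h_entropy : n * log 2 + (-2 * α ^ 2 / n - 2 * |α| ^ 3 / (n : ℝ) ^ 2) ≤
      n * binEntropy (k / n) := by
    calc n * log 2 + (-2 * α ^ 2 / n - 2 * |α| ^ 3 / (n : ℝ) ^ 2)
        = n * (log 2 - 2 * (α / n) ^ 2 - 2 * |α / n| ^ 3) := by
          rw [abs_div, Nat.abs_cast]; field_simp; ring
      _ ≤ n * binEntropy (k / n) := by
          rw [h_kn]; gcongr; exact log_two_sub_le_binEntropy h_abs
  have h_two_pow : exp (n * log 2) = 2 ^ n := by rw [exp_nat_mul, exp_log two_pos]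
  rw [le_div_iff₀ (by positivity), ← h_two_pow, mul_assoc, ← exp_add, add_comm]
  exact le_trans (by gcongr) (inv_sqrt_mul_exp_binEntropy_le_choose hn hkn)

lemma one_div_exp_mul_sqrt_two_pi_le :
    1 / (exp (1 / 6) * √(2 * π)) ≤ 2 * √(2 * π) / exp 1 ^ 2 := by
  have h_exp_sq : exp 1 ^ 2 ≤ 3 ^ 2 := by
    gcongr
    exact exp_one_lt_three.le
  have h_exp_sixth : 1 ≤ exp (1 / 6) := one_le_exp (by norm_num)
  rw [div_le_div_iff₀ (by positivity) (by positivity)]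
  calc 1 * exp 1 ^ 2 ≤ 1 * (4 * π) := by linarith [pi_gt_three]
    _ ≤ exp (1 / 6) * (4 * π) := by gcongr
    _ = 2 * √(2 * π) * (exp (1 / 6) * √(2 * π)) := by
        linear_combination (-2 * exp (1 / 6)) * sq_sqrt (by positivity : 0 ≤ 2 * π)

theorem binomial_point_lower_general {Ω : Type*} [MeasurableSpace Ω] (μ : Measure Ω)
    (n : ℕ) (hn : 1 ≤ n) (X : Ω → ℕ)
    (hbin : ∀ j : ℕ, μ {ω | X ω = j} = (n.choose j : ENNReal) / 2 ^ n)
    (α : ℝ) (hαint : ∃ j : ℕ, (j : ℝ) = (n : ℝ) / 2 + α) (hα : α ≤ (n : ℝ) / 2) :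
    ENNReal.ofReal
        (1 / (exp (1 / 6) * √(2 * π)) * (√n)⁻¹ *
          exp (-2 * α ^ 2 / n - 4 * |α| ^ 3 / (n : ℝ) ^ 2))
      ≤ μ {ω | (X ω : ℝ) = (n : ℝ) / 2 + α} := by
  obtain ⟨k, hk⟩ := hαint
  have hkn : k ≤ n := by rify; linarith
  have h_ofReal : (n.choose k : ENNReal) / 2 ^ n = ENNReal.ofReal (n.choose k / 2 ^ n) := by
    simp [ENNReal.ofReal_div_of_pos, ENNReal.ofReal_pow]
  simp only [← hk, Nat.cast_inj]
  rw [hbin, h_ofReal]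
  refine ENNReal.ofReal_le_ofReal
    (le_trans ?_ (inv_sqrt_mul_exp_le_choose_div_two_pow hn hkn hk))
  gcongr ?_ * _ * exp (_ - ?_ * _ / _)
  · exact one_div_exp_mul_sqrt_two_pi_le
  · norm_num

/-- Pointwise lower bound for the binomial distribution: if `X ~ Bin(n, 1/2)`, `α ≥ 0`,
`n/2 + α` is an integer and `α ≤ n/2`, then
`Pr[X = n/2 + α] ≥ (1/(e^(1/6)·√(2π)))·n^(−1/2)·exp(−2α²/n − 4α³/n²)`. -/
theorem binomial_point_lower {Ω : Type*} [MeasurableSpace Ω] (μ : Measure Ω)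
    [IsProbabilityMeasure μ] (n : ℕ) (hn : 1 ≤ n)
    (X : Ω → ℕ) (hXmeas : Measurable X)
    (hbin : ∀ j : ℕ, μ {ω | X ω = j} = (n.choose j : ENNReal) / 2 ^ n)
    (α : ℝ) (hα0 : 0 ≤ α) (hαint : ∃ j : ℕ, (j : ℝ) = (n : ℝ) / 2 + α)
    (hα2 : α ≤ (n : ℝ) / 2) :
    ENNReal.ofReal
        (1 / (Real.exp (1 / 6) * Real.sqrt (2 * Real.pi)) * (Real.sqrt n)⁻¹ *
          Real.exp (-2 * α ^ 2 / n - 4 * α ^ 3 / (n : ℝ) ^ 2))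
      ≤ μ {ω | ((X ω : ℝ)) = (n : ℝ) / 2 + α} := by
  simpa only [abs_of_nonneg hα0] using
    binomial_point_lower_general μ n hn X hbin α hαint hα2
end
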